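/- arXiv:math-ph/0611014 — 3 statements merged into one kernel-verified Lean document; each statement's English description precedes it below -/
import Mathlib

section
/- Let G be a group, V a complex vector space, θ : G → GL(V) a group homomorphism, and suppose V = V₊ ⊕ V₋ is a direct sum decomposition with projections P₊ and P₋. Let g, g₋, g₊ ∈ G satisfy g = g₋⁻¹g₊ and let α ∈ V. Set α₊ = P₊(θ(g₋)α) and α₋ = −P₋(θ(g₋)α). Then α₊ ∈ V₊, α₋ ∈ V₋, and in the semidirect product G ⋉_θ V one has (g₋,α₋)⁻¹ · (g₊,α₊) = (g,α). (Thus a Birkhoff factorization of g together with the decomposition of V yields a Birkhoff factorization of (g,α).) -/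
/-- The multiplication of the semidirect product `G ⋉_θ V`:
`(g,h)·(g',h') = (gg', h + θ(g)h')`. -/
def sdMul {G V : Type*} [Group G] [AddCommGroup V] [Module ℂ V]
    (θ : G →* (V ≃ₗ[ℂ] V)) (p q : G × V) : G × V :=
  (p.1 * q.1, p.2 + θ p.1 q.2)

/-- A Birkhoff factorization `g = g₋⁻¹g₊` in `G` together with a direct sum
decomposition `V = V₊ ⊕ V₋` (with projections `P₊`, `P₋`) yields a Birkhoff
factorization of `(g,α)` in the semidirect product `G ⋉_θ V`: setting
`α₊ = P₊(θ(g₋)α)` and `α₋ = −P₋(θ(g₋)α)`, one has `α₊ ∈ V₊`, `α₋ ∈ V₋` and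
`(g₋,α₋)⁻¹ · (g₊,α₊) = (g,α)`. -/
theorem statement9 (G V : Type*) [Group G] [AddCommGroup V] [Module ℂ V]
    (θ : G →* (V ≃ₗ[ℂ] V))
    (Vp Vm : Submodule ℂ V)
    (hdisjoint : Vp ⊓ Vm = ⊥)
    (Pp Pm : V →ₗ[ℂ] V)
    (hPp : ∀ v : V, Pp v ∈ Vp) (hPm : ∀ v : V, Pm v ∈ Vm)
    (hsum : ∀ v : V, Pp v + Pm v = v)
    (g gm gp : G) (hg : g = gm⁻¹ * gp) (α : V) :
    Pp (θ gm α) ∈ Vp ∧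
    -(Pm (θ gm α)) ∈ Vm ∧
    sdMul θ (gm⁻¹, -(θ gm⁻¹ (-(Pm (θ gm α))))) (gp, Pp (θ gm α)) = (g, α) := by
  refine ⟨hPp _, Vm.neg_mem (hPm _), ?_⟩
  have h : θ gm⁻¹ (θ gm α) = α := by
    rw [← LinearEquiv.mul_apply, ← map_mul, inv_mul_cancel, map_one]
    rfl
  unfold sdMul
  refine Prod.ext hg.symm ?_
  change -(θ gm⁻¹ (-(Pm (θ gm α)))) + θ gm⁻¹ (Pp (θ gm α)) = α
  rw [map_neg, neg_neg, ← map_add, add_comm, hsum, h]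
end

section
/- Consider the group G₀ = (ℂ^6, ⊕) with (x₁,x₂,x₃,x₄,x₅,s) ⊕ (y₁,y₂,y₃,y₄,y₅,t) = (x₁+e^s y₁, x₂+e^{2s}y₂, x₃+e^{3s}y₃, x₄+e^{3s}y₄+e^{2s}x₁y₂−e^s x₂y₁, x₅+e^{4s}y₅, s+t). Define vector fields on ℂ^6 (writing y = (y₁,…,y₅,t) and e₁,…,e₆ for the standard basis) by Y₁(y) = e^t(e₁ − y₂e₄), Y₂(y) = e^{2t}(e₂ + y₁e₄), Y₃(y) = e^{3t}e₃, Y₄(y) = e^{3t}e₄, Y₅(y) = e^{4t}e₅, Z₀(y) = e₆. Then these vector fields are left invariant: for every x, y ∈ ℂ^6, the left translation L_x : y ↦ x ⊕ y is holomorphic and its derivative satisfies D(L_x)(y)(V(y)) = V(x⊕y) for each V ∈ {Y₁, Y₂, Y₃, Y₄, Y₅, Z₀}. -/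
/-- The group operation `⊕` on `ℂ^6`. -/
noncomputable def cSixMul (x y : Fin 6 → ℂ) : Fin 6 → ℂ :=
  ![x 0 + Complex.exp (x 5) * y 0,
    x 1 + Complex.exp (2 * x 5) * y 1,
    x 2 + Complex.exp (3 * x 5) * y 2,
    x 3 + Complex.exp (3 * x 5) * y 3
      + Complex.exp (2 * x 5) * x 0 * y 1 - Complex.exp (x 5) * x 1 * y 0,
    x 4 + Complex.exp (4 * x 5) * y 4,
    x 5 + y 5]

/-- The standard basis vectors `e₁,…,e₆` of `ℂ^6` (indexed from `0`). -/
noncomputable def ee (i : Fin 6) : Fin 6 → ℂ := Pi.single i 1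

/-- The vector field `Y₁(y) = e^t(e₁ − y₂e₄)`. -/
noncomputable def Y1 (y : Fin 6 → ℂ) : Fin 6 → ℂ :=
  Complex.exp (y 5) • (ee 0 - y 1 • ee 3)

/-- The vector field `Y₂(y) = e^{2t}(e₂ + y₁e₄)`. -/
noncomputable def Y2 (y : Fin 6 → ℂ) : Fin 6 → ℂ :=
  Complex.exp (2 * y 5) • (ee 1 + y 0 • ee 3)

/-- The vector field `Y₃(y) = e^{3t}e₃`. -/
noncomputable def Y3 (y : Fin 6 → ℂ) : Fin 6 → ℂ :=
  Complex.exp (3 * y 5) • ee 2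

/-- The vector field `Y₄(y) = e^{3t}e₄`. -/
noncomputable def Y4 (y : Fin 6 → ℂ) : Fin 6 → ℂ :=
  Complex.exp (3 * y 5) • ee 3

/-- The vector field `Y₅(y) = e^{4t}e₅`. -/
noncomputable def Y5 (y : Fin 6 → ℂ) : Fin 6 → ℂ :=
  Complex.exp (4 * y 5) • ee 4

/-- The vector field `Z₀(y) = e₆`. -/
noncomputable def Z0 (_y : Fin 6 → ℂ) : Fin 6 → ℂ := ee 5

/-- The linear part of the left translation by `x`. -/
noncomputable def leftLin (x : Fin 6 → ℂ) : (Fin 6 → ℂ) →ₗ[ℂ] (Fin 6 → ℂ) where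
  toFun v := cSixMul x v - cSixMul x 0
  map_add' v w := by
    ext i
    fin_cases i <;> simp [cSixMul] <;> ring
  map_smul' c v := by
    ext i
    fin_cases i <;> simp [cSixMul] <;> ring

theorem leftLin_hasFDerivAt (x y : Fin 6 → ℂ) :
    HasFDerivAt (fun z => cSixMul x z) (LinearMap.toContinuousLinearMap (leftLin x)) y := by
  have h := (LinearMap.toContinuousLinearMap (leftLin x)).hasFDerivAt (x := y)
  have h2 := h.add_const (cSixMul x 0)
  refine h2.congr_of_eventuallyEq (Filter.Eventually.of_forall fun z => ?_)
  simp [leftLin]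

/-- The vector fields `Y₁, Y₂, Y₃, Y₄, Y₅, Z₀` are left invariant on
`G₀ = (ℂ^6, ⊕)`: each left translation `L_x : y ↦ x ⊕ y` is holomorphic and
`D(L_x)(y)(V(y)) = V(x ⊕ y)`. -/
theorem statement14 :
    ∀ x y : Fin 6 → ℂ,
      DifferentiableAt ℂ (fun z => cSixMul x z) y ∧
      (∀ V ∈ ({Y1, Y2, Y3, Y4, Y5, Z0} :
          Set ((Fin 6 → ℂ) → (Fin 6 → ℂ))),
        fderiv ℂ (fun z => cSixMul x z) y (V y) = V (cSixMul x y)) := by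
  intro x y
  have h := leftLin_hasFDerivAt x y
  refine ⟨h.differentiableAt, ?_⟩
  rw [h.fderiv]
  have e2 : ∀ a : ℂ, Complex.exp (2 * a) = Complex.exp a ^ 2 := fun a => by
    rw [← Complex.exp_nat_mul]; norm_num
  have e3 : ∀ a : ℂ, Complex.exp (3 * a) = Complex.exp a ^ 3 := fun a => by
    rw [← Complex.exp_nat_mul]; norm_num
  have e4 : ∀ a : ℂ, Complex.exp (4 * a) = Complex.exp a ^ 4 := fun a => by
    rw [← Complex.exp_nat_mul]; norm_num
  intro V hV
  simp only [Set.mem_insert_iff, Set.mem_singleton_iff] at hV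
  rcases hV with rfl | rfl | rfl | rfl | rfl | rfl <;> ext i <;> fin_cases i <;>
    simp [leftLin, cSixMul, Y1, Y2, Y3, Y4, Y5, Z0, ee, e2, e3, e4, Complex.exp_add,
      Pi.single_apply] <;> ring
end

section
/- Consider the group G₀ = (ℂ^6, ⊕) with (x₁,x₂,x₃,x₄,x₅,s) ⊕ (y₁,y₂,y₃,y₄,y₅,t) = (x₁+e^s y₁, x₂+e^{2s}y₂, x₃+e^{3s}y₃, x₄+e^{3s}y₄+e^{2s}x₁y₂−e^s x₂y₁, x₅+e^{4s}y₅, s+t). Let a = (a₁,…,a₆) ∈ ℂ^6 with a₆ ≠ 0, and define γ_a : ℂ → ℂ^6 by γ_a(t) = ( a₁(e^{a₆t}−1)/a₆, a₂(e^{2a₆t}−1)/(2a₆), a₃(e^{3a₆t}−1)/(3a₆), a₄(e^{3a₆t}−1)/(3a₆) + (a₁a₂/(2a₆²))((e^{3a₆t}−1)/3 − e^{2a₆t} + e^{a₆t}), a₅(e^{4a₆t}−1)/(4a₆), a₆t ). Then γ_a is a one-parameter subgroup: γ_a(s+t) = γ_a(s) ⊕ γ_a(t) for all s, t ∈ ℂ,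 γ_a(0) = 0, and γ_a is differentiable with γ_a'(0) = a. (Thus exp(Σᵢaᵢ Yᵢ + a₆Z₀) = γ_a(1) in G₀.) -/
/-- The curve `γ_a : ℂ → ℂ^6` (for `a₆ ≠ 0`). -/
noncomputable def gammaCurve (a : Fin 6 → ℂ) (t : ℂ) : Fin 6 → ℂ :=
  ![a 0 * (Complex.exp (a 5 * t) - 1) / (a 5),
    a 1 * (Complex.exp (2 * a 5 * t) - 1) / (2 * a 5),
    a 2 * (Complex.exp (3 * a 5 * t) - 1) / (3 * a 5),
    a 3 * (Complex.exp (3 * a 5 * t) - 1) / (3 * a 5)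
      + (a 0 * a 1 / (2 * a 5 ^ 2)) *
          ((Complex.exp (3 * a 5 * t) - 1) / 3
            - Complex.exp (2 * a 5 * t) + Complex.exp (a 5 * t)),
    a 4 * (Complex.exp (4 * a 5 * t) - 1) / (4 * a 5),
    a 5 * t]

/-- For `a ∈ ℂ^6` with `a₆ ≠ 0`, the curve `γ_a` is a one-parameter subgroup
of `G₀ = (ℂ^6, ⊕)` with `γ_a(0) = 0`, and it is differentiable with
`γ_a'(0) = a`  (thus `exp(Σᵢaᵢ Yᵢ + a₆Z₀) = γ_a(1)` in `G₀`). -/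
theorem statement16 (a : Fin 6 → ℂ) (ha : a 5 ≠ 0) :
    (∀ s t : ℂ, gammaCurve a (s + t) = cSixMul (gammaCurve a s) (gammaCurve a t)) ∧
    gammaCurve a 0 = 0 ∧
    Differentiable ℂ (gammaCurve a) ∧
    HasDerivAt (gammaCurve a) a 0 := by
  have h2 : ∀ z : ℂ, Complex.exp (2 * a 5 * z) = Complex.exp (a 5 * z) ^ 2 := by
    intro z; rw [← Complex.exp_nat_mul]; congr 1; push_cast; ring
  have h3 : ∀ z : ℂ, Complex.exp (3 * a 5 * z) = Complex.exp (a 5 * z) ^ 3 := by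
    intro z; rw [← Complex.exp_nat_mul]; congr 1; push_cast; ring
  have h4 : ∀ z : ℂ, Complex.exp (4 * a 5 * z) = Complex.exp (a 5 * z) ^ 4 := by
    intro z; rw [← Complex.exp_nat_mul]; congr 1; push_cast; ring
  have hE : ∀ c : ℂ, ∀ z : ℂ,
      HasDerivAt (fun t : ℂ => Complex.exp (c * t)) (Complex.exp (c * z) * c) z := by
    intro c z
    have h := ((hasDerivAt_id z).const_mul c).cexp
    simpa using h
  refine ⟨?_, ?_, ?_, ?_⟩
  · intro s t
    have hadd : Complex.exp (a 5 * (s + t)) = Complex.exp (a 5 * s) * Complex.exp (a 5 * t) := by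
      rw [mul_add, Complex.exp_add]
    funext i
    fin_cases i <;>
      simp [gammaCurve, cSixMul, ← mul_assoc, h2, h3, h4, hadd] <;> field_simp <;> ring
  · funext i
    fin_cases i <;> simp [gammaCurve]
  · rw [differentiable_pi]
    intro i
    fin_cases i <;> simp [gammaCurve] <;> fun_prop
  · rw [hasDerivAt_pi]
    intro i
    fin_cases i
    · have h := (((hE (a 5) 0).sub_const 1).const_mul (a 0)).div_const (a 5)
      refine h.congr_deriv ?_
      simp; field_simp
    · have h := (((hE (2 * a 5) 0).sub_const 1).const_mul (a 1)).div_const (2 * a 5)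
      refine h.congr_deriv ?_
      simp; field_simp
    · have h := (((hE (3 * a 5) 0).sub_const 1).const_mul (a 2)).div_const (3 * a 5)
      refine h.congr_deriv ?_
      simp; field_simp
    · have h := ((((hE (3 * a 5) 0).sub_const 1).const_mul (a 3)).div_const (3 * a 5)).add
        ((((((hE (3 * a 5) 0).sub_const 1).div_const 3).sub (hE (2 * a 5) 0)).add
          (hE (a 5) 0)).const_mul (a 0 * a 1 / (2 * a 5 ^ 2)))
      refine h.congr_deriv ?_
      simp; field_simp; ring
    · have h := (((hE (4 * a 5) 0).sub_const 1).const_mul (a 4)).div_const (4 * a 5)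
      refine h.congr_deriv ?_
      simp; field_simp
    · have h := (hasDerivAt_id (0:ℂ)).const_mul (a 5)
      refine h.congr_deriv ?_
      simp
end
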